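/- The operators L¹_n on the neutral fermion Fock space F satisfy the Virasoro relations with central charge 1: for all m, n ∈ ℤ, L¹_m ∘ L¹_n − L¹_n ∘ L¹_m = (m−n) L¹_{m+n} + δ_{m,−n} · ((m³−m)/12) · id_F. (These are the modes of the 2-point-local Virasoro field L¹(z²) = (1/2z²):h^D(z)h^D(z): of central charge 1 on F^{⊗1/2}.) -/

import Mathlib

noncomputable section

/-- The neutral fermion Fock space `F = F^{⊗1/2}`: the complex vector space with
basis `{e_S : S a finite subset of ℕ}`. -/
abbrev FockD : Type := Finset ℕ →₀ ℂ

/-- Basis vector `e_S`. -/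
def eD (S : Finset ℕ) : FockD := Finsupp.single S 1

/-- Action of the fermion mode `a_m` on the basis vector `e_S`. -/
def aVec (m : ℤ) (S : Finset ℕ) : FockD :=
  if 0 ≤ m then
    if m.toNat ∈ S then 0
    else ((-1 : ℂ) ^ (S.filter (fun s => m.toNat < s)).card) • eD (insert m.toNat S)
  else
    if (-m - 1).toNat ∈ S then
      ((-1 : ℂ) ^ (S.filter (fun s => (-m - 1).toNat < s)).card) • eD (S.erase ((-m - 1).toNat))
    else 0

/-- The fermion mode `a_m` as a linear operator on `F`. -/
def aOp (m : ℤ) : FockD →ₗ[ℂ] FockD :=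
  Finsupp.lsum ℂ fun S => LinearMap.toSpanSingleton ℂ FockD (aVec m S)

/-- Fermionic normal ordered product `:a_i a_j:`. -/
def NO (i j : ℤ) : FockD →ₗ[ℂ] FockD :=
  if 0 ≤ i then (aOp i).comp (aOp j) else -((aOp j).comp (aOp i))

/-- Heisenberg operator `h_n = (1/2) ∑_{i∈ℤ} (−1)^{i+1} :a_i a_{−2n−1−i}:`
(on each vector only finitely many summands are nonzero). -/
def hD (n : ℤ) (x : FockD) : FockD :=
  (1 / 2 : ℂ) • ∑ᶠ i : ℤ, ((-1 : ℂ) ^ (i + 1)) • NO i (-2 * n - 1 - i) x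

/-- Virasoro operator `L^{1/2}_m = (1/2) ∑_{i∈ℤ} i · :a_i a_{−m−i−1}:`. -/
def LhalfD (m : ℤ) (x : FockD) : FockD :=
  (1 / 2 : ℂ) • ∑ᶠ i : ℤ, (i : ℂ) • NO i (-m - i - 1) x

/-- 2-point Virasoro operator `L¹_n = (1/2) ∑_{j∈ℤ} :h_j h_{n−j}:`, where the bosonic
normal ordered product is `:h_j h_k: = h_j h_k` if `j ≤ k` and `h_k h_j` otherwise. -/
def L1D (n : ℤ) (x : FockD) : FockD :=
  (1 / 2 : ℂ) • ∑ᶠ j : ℤ, if j ≤ n - j then hD j (hD (n - j) x) else hD (n - j) (hD j x)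

/-- Charge `c(S) = #{s ∈ S : s odd} − #{s ∈ S : s even}`. -/
def chg (S : Finset ℕ) : ℤ :=
  ((S.filter fun s => Odd s).card : ℤ) - ((S.filter fun s => Even s).card : ℤ)

/-- Charge-`n` component `F_{(n)}`: the span of the `e_S` with `c(S) = n`. -/
def FockComp (n : ℤ) : Submodule ℂ FockD :=
  Submodule.span ℂ {x : FockD | ∃ S : Finset ℕ, chg S = n ∧ x = eD S}

/-- Index set of the vacuum-like vector `v_n`. -/
def vSet (n : ℤ) : Finset ℕ :=
  if 0 ≤ n then (Finset.range n.toNat).image fun i => 2 * i + 1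
  else (Finset.range (-n).toNat).image fun i => 2 * i

/-- Vacuum-like vector `v_n` (`v_0 = e_∅`, `v_n = e_{{1,3,…,2n−1}}`,
`v_{−n} = e_{{0,2,…,2n−2}}` for `n > 0`). -/
def vD (n : ℤ) : FockD := eD (vSet n)

/-! ### Generalities on locally finite sums -/

/-- Telescoping. -/
theorem finsum_telescope {V : Type*} [AddCommGroup V] (f : ℤ → V) (c : V)
    (N : ℤ) (h0 : ∀ i, N ≤ i → f i = 0) (h1 : ∀ i, i ≤ -N → f i = c) :
    ∀ k : ℤ, (Function.support fun i => f (i - k) - f i).Finite ∧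
      ∑ᶠ i, (f (i - k) - f i) = k • c := by
  have fin : ∀ k : ℤ, (Function.support fun i => f (i - k) - f i).Finite := by
    intro k
    refine (Set.finite_Icc (-N - |k|) (N + |k|)).subset ?_
    intro i hi
    by_contra hc
    apply hi
    have h2 := abs_nonneg k
    have h3 := le_abs_self k
    have h4 := neg_abs_le k
    simp only [Set.mem_Icc, not_and_or, not_le] at hc
    rcases hc with hc | hc
    · show f (i - k) - f i = 0
      rw [h1 _ (by omega), h1 _ (by omega), sub_self]
    · show f (i - k) - f i = 0
      rw [h0 _ (by omega), h0 _ (by omega), sub_self]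
  have one : ∑ᶠ i, (f (i - 1) - f i) = c := by
    have key : ∀ n : ℕ, ∀ a : ℤ,
        ∑ i ∈ Finset.Ico a (a + n), (f (i - 1) - f i) = f (a - 1) - f (a + n - 1) := by
      intro n a
      induction n with
      | zero => simp
      | succ n ih =>
        have : Finset.Ico a (a + (n + 1 : ℕ)) = insert (a + n) (Finset.Ico a (a + n)) := by
          ext j; simp; omega
        rw [this, Finset.sum_insert (by simp), ih]
        have : a + ((n + 1 : ℕ) : ℤ) - 1 = a + n := by push_cast; ring
        rw [this]; abel
    have hs : (Function.support fun i => f (i - 1) - f i) ⊆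
        ↑(Finset.Ico (-(|N| + 1)) (-(|N| + 1) + ((2 * (|N| + 2)).toNat : ℤ))) := by
      intro i hi
      by_contra hc
      apply hi
      have h2 := abs_nonneg N
      have h3 := le_abs_self N
      simp only [Finset.coe_Ico, Set.mem_Ico, not_and_or, not_le] at hc
      show f (i - 1) - f i = 0
      by_cases hh : i < -(|N| + 1)
      · rw [h1 _ (by omega), h1 _ (by omega), sub_self]
      · rw [h0 _ (by omega), h0 _ (by omega), sub_self]
    rw [finsum_eq_sum_of_support_subset _ hs, key]
    have h2 := abs_nonneg N
    have h3 := le_abs_self N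
    rw [h1 _ (by omega), h0 _ (by omega), sub_zero]
  have step : ∀ k : ℤ, ∑ᶠ i, (f (i - (k + 1)) - f i) = ∑ᶠ i, (f (i - k) - f i) + c := by
    intro k
    have e1 : ∑ᶠ i, (f (i - k - 1) - f (i - k)) = c := by
      rw [← one]
      exact finsum_comp_equiv (Equiv.subRight k) (f := fun i => f (i - 1) - f i)
    have e2 : (Function.support fun i => f (i - k - 1) - f (i - k)).Finite := by
      have := (fin (k + 1)).union (fin k)
      refine this.subset ?_
      intro i hi
      by_contra hc
      apply hi
      simp only [Set.mem_union, Function.mem_support, not_or, not_not] at hc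
      have h3 := hc.1
      have h4 := hc.2
      show f (i - k - 1) - f (i - k) = 0
      rw [show i - k - 1 = i - (k + 1) by ring, sub_eq_zero.1 h3, sub_eq_zero.1 h4, sub_self]
    refine Eq.trans ?_ (congrArg (fun y => ∑ᶠ i, (f (i - k) - f i) + y) e1)
    rw [← finsum_add_distrib (fin k) e2]
    apply finsum_congr
    intro i
    rw [show i - k - 1 = i - (k + 1) by ring]
    abel
  intro k
  refine ⟨fin k, ?_⟩
  induction k using Int.induction_on with
  | zero => simp
  | succ k ih => rw [step, ih, add_smul, one_smul]
  | pred k ih =>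
    have := step (-k - 1)
    rw [sub_add_cancel, ih] at this
    rw [sub_smul, one_smul, this]; abel

/-- A locally finite sum of linear maps. -/
def lfSum {V : Type*} [AddCommGroup V] [Module ℂ V] (T : ℤ → V →ₗ[ℂ] V)
    (hT : ∀ x, (Function.support fun i => T i x).Finite) : V →ₗ[ℂ] V where
  toFun x := ∑ᶠ i, T i x
  map_add' x y := by
    simp only [map_add]
    exact finsum_add_distrib (hT x) (hT y)
  map_smul' c x := by
    simp only [map_smul, RingHom.id_apply]
    exact (smul_finsum' c (hT x)).symm

theorem lfSum_comm {V : Type*} [AddCommGroup V] [Module ℂ V] (T : ℤ → V →ₗ[ℂ] V)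
    (hT : ∀ x, (Function.support fun i => T i x).Finite) (S : V →ₗ[ℂ] V) (x : V) :
    S (lfSum T hT x) - lfSum T hT (S x) = ∑ᶠ i, (S (T i x) - T i (S x)) := by
  have e : S (lfSum T hT x) = ∑ᶠ i, S (T i x) := by
    show S (∑ᶠ i, T i x) = _
    exact (S : V →+ V).map_finsum (hT x)
  rw [e]
  show _ - ∑ᶠ i, T i (S x) = _
  rw [finsum_sub_distrib _ (hT (S x))]
  refine (hT x).subset ?_
  intro i hi hc
  apply hi
  show S (T i x) = 0
  rw [show T i x = 0 from hc, map_zero]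

/-! ### From Heisenberg to Virasoro -/

theorem sum_cube (m : ℤ) (hm : 0 ≤ m) :
    ∑ᶠ j : ℤ, (j * (j + m) * ((if 0 < j then 1 else 0) - (if 0 < j + m then 1 else 0)) : ℤ) * 6
      = m ^ 3 - m := by
  obtain ⟨k, rfl⟩ := Int.eq_ofNat_of_zero_le hm
  have hs : (Function.support fun j : ℤ => (j * (j + k) * ((if 0 < j then 1 else 0) -
      (if 0 < j + k then 1 else 0)) : ℤ) * 6) ⊆
      ↑((Finset.range k).image fun t : ℕ => -(t : ℤ)) := by
    intro j hj
    by_contra hc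
    apply hj
    simp only [Finset.coe_image, Finset.coe_range, Set.mem_image, Set.mem_Iio, not_exists,
      not_and] at hc
    have := hc (-j).toNat
    dsimp only
    split_ifs with h1 h2 h2
    · simp
    · omega
    · exfalso; omega
    · simp
  rw [finsum_eq_sum_of_support_subset _ hs, Finset.sum_image (by intro a _ b _; simp)]
  have key : ∀ l : ℕ, ∑ t ∈ Finset.range l, ((t : ℤ) * (k - t) * 6) =
      3 * k * l * (l - 1) - (l - 1) * l * (2 * l - 1) := by
    intro l
    induction l with
    | zero => simp
    | succ l ih => rw [Finset.sum_range_succ, ih]; push_cast; ring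
  have e : ∀ t ∈ Finset.range k, (-(t : ℤ) * (-(t : ℤ) + k) * ((if 0 < -(t : ℤ) then 1 else 0) -
      (if 0 < -(t : ℤ) + k then 1 else 0)) : ℤ) * 6 = (t : ℤ) * (k - t) * 6 := by
    intro t ht
    have ht := Finset.mem_range.1 ht
    rw [if_neg (by omega), if_pos (by omega)]; ring
  rw [Finset.sum_congr rfl e, key]
  ring

theorem sum_cube' (m : ℤ) :
    ∑ᶠ j : ℤ, (j * (j + m) * ((if 0 < j then 1 else 0) - (if 0 < j + m then 1 else 0)) : ℤ) * 6
      = m ^ 3 - m := by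
  rcases le_total 0 m with h | h
  · exact sum_cube m h
  · have h1 := sum_cube (-m) (by omega)
    rw [← finsum_comp_equiv (Equiv.addRight m)] at h1
    have : m ^ 3 - m = -((-m) ^ 3 - -m) := by ring
    rw [this, ← h1, ← finsum_neg_distrib]
    apply finsum_congr
    intro j
    show _ = -((j + m) * (j + m + -m) * ((if 0 < j + m then 1 else 0) -
      (if 0 < j + m + -m then 1 else 0)) * 6)
    rw [add_neg_cancel_right]
    ring

section Heis

variable {V : Type*} [AddCommGroup V] [Module ℂ V] (h : ℤ → V →ₗ[ℂ] V)

/-- Bosonic normal ordered product. -/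
def bNO (j k : ℤ) : V →ₗ[ℂ] V := if j ≤ k then h j ∘ₗ h k else h k ∘ₗ h j

theorem bNO_fin (hk : ∀ x, ∃ N : ℤ, ∀ n, N ≤ n → h n x = 0) (n : ℤ) (x : V) :
    (Function.support fun j => bNO h j (n - j) x).Finite := by
  obtain ⟨N, hN⟩ := hk x
  refine (Set.finite_Icc (n - N) N).subset ?_
  intro j hj
  by_contra hc
  apply hj
  simp only [Set.mem_Icc, not_and_or, not_le] at hc
  show bNO h j (n - j) x = 0
  unfold bNO
  split_ifs with h1
  · rw [LinearMap.comp_apply, hN (n - j) (by omega), map_zero]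
  · rw [LinearMap.comp_apply, hN j (by omega), map_zero]

/-- Twice the Sugawara operators. -/
def LL (hk : ∀ x, ∃ N : ℤ, ∀ n, N ≤ n → h n x = 0) (n : ℤ) : V →ₗ[ℂ] V :=
  lfSum (fun j => bNO h j (n - j)) (bNO_fin h hk n)

theorem bNO_eq (hc : ∀ m n x, h m (h n x) - h n (h m x) = (if m + n = 0 then (m : ℂ) else 0) • x)
    (j k : ℤ) (x : V) :
    bNO h j k x = h j (h k x) - (if j + k = 0 then (if 0 < j then (j : ℂ) else 0) else 0) • x := by
  unfold bNO
  split_ifs with h1 h2 h3 h2 h3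
  · omega
  · simp
  · simp
  · have := hc j k x
    rw [if_pos h2] at this
    rw [← this]; simp
  · omega
  · have := hc j k x
    rw [if_neg h2, zero_smul, sub_eq_zero] at this
    simp [this]

theorem LL_comm_h (hk : ∀ x, ∃ N : ℤ, ∀ n, N ≤ n → h n x = 0)
    (hc : ∀ m n x, h m (h n x) - h n (h m x) = (if m + n = 0 then (m : ℂ) else 0) • x)
    (n k : ℤ) (x : V) :
    h k (LL h hk n x) - LL h hk n (h k x) = (2 * k : ℂ) • h (n + k) x := by
  unfold LL
  rw [lfSum_comm]
  have e : ∀ j, h k (bNO h j (n - j) x) - bNO h j (n - j) (h k x) =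
      (if j = -k then (k : ℂ) • h (n + k) x else 0) +
      (if j = n + k then (k : ℂ) • h (n + k) x else 0) := by
    intro j
    rw [bNO_eq h hc, bNO_eq h hc, map_sub, map_smul]
    have h1 := hc k j (h (n - j) x)
    have h2 := congrArg (h j) (hc k (n - j) x)
    rw [map_sub, map_smul] at h2
    have h3 : h k (h j (h (n - j) x)) - h j (h (n - j) (h k x)) =
      (if k + j = 0 then (k : ℂ) else 0) • (h (n - j) x) +
      (if k + (n - j) = 0 then (k : ℂ) else 0) • h j x := by
      rw [← h1, ← h2]; abel
    have h4 : (if k + j = 0 then (k : ℂ) else 0) • (h (n - j) x) =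
        if j = -k then (k : ℂ) • h (n + k) x else 0 := by
      by_cases hh : j = -k
      · subst hh; simp
      · rw [if_neg hh, if_neg (by omega), zero_smul]
    have h5 : (if k + (n - j) = 0 then (k : ℂ) else 0) • h j x =
        if j = n + k then (k : ℂ) • h (n + k) x else 0 := by
      by_cases hh : j = n + k
      · subst hh; simp
      · rw [if_neg hh, if_neg (by omega), zero_smul]
    rw [← h4, ← h5, ← h3]; abel
  rw [finsum_congr e, finsum_add_distrib]
  · rw [finsum_eq_single _ (-k) (by intro j hj; rw [if_neg hj]),
      finsum_eq_single _ (n + k) (by intro j hj; rw [if_neg hj]), if_pos rfl, if_pos rfl, ← add_smul]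
    congr 1; ring
  · refine (Set.finite_singleton (-k)).subset ?_
    intro j hj
    by_contra hc
    exact hj (if_neg hc)
  · refine (Set.finite_singleton (n + k)).subset ?_
    intro j hj
    by_contra hc
    exact hj (if_neg hc)

theorem LL_comm (hk : ∀ x, ∃ N : ℤ, ∀ n, N ≤ n → h n x = 0)
    (hc : ∀ m n x, h m (h n x) - h n (h m x) = (if m + n = 0 then (m : ℂ) else 0) • x)
    (m n : ℤ) (x : V) :
    LL h hk m (LL h hk n x) - LL h hk n (LL h hk m x) =
      (2 * (m - n) : ℂ) • LL h hk (m + n) x +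
        (if m = -n then ((m ^ 3 - m : ℤ) : ℂ) / 3 else 0) • x := by
  conv_lhs => rw [LL.eq_def h hk n]
  rw [lfSum_comm]
  set Nf : ℤ → V := fun j => bNO h j (m + n - j) x with hNf
  have fN : (Function.support Nf).Finite := bNO_fin h hk (m + n) x
  have fs : ∀ c : ℤ → ℂ, (Function.support fun j => c j • Nf j).Finite := by
    intro c
    refine fN.subset ?_
    intro j hj h0
    exact hj (by show c j • Nf j = 0; rw [h0, smul_zero])
  have fsm : ∀ c : ℤ → ℂ, (Function.support fun j => c (j + m) • Nf (j + m)).Finite := by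
    intro c
    exact (fs c).preimage (f := fun j => j + m) (fun a _ b _ hab => by simpa using hab)
  have sm : ∀ c : ℤ → ℂ, ∑ᶠ j, c (j + m) • Nf (j + m) = ∑ᶠ j, c j • Nf j := by
    intro c
    exact finsum_comp_equiv (Equiv.addRight m) (f := fun j => c j • Nf j)
  set g : ℤ → ℤ := fun j => j * (j + m) * ((if 0 < j then 1 else 0) -
    (if 0 < j + m then 1 else 0)) * 6 with hg
  have fg : (Function.support g).Finite := by
    refine (Set.finite_Icc (-|m|) |m|).subset ?_
    intro j hj
    by_contra hcc
    apply hj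
    simp only [Set.mem_Icc, not_and_or, not_le] at hcc
    have h3 := le_abs_self m
    have h4 := neg_abs_le m
    simp only [hg]
    split_ifs <;> first | omega | simp
  have e : ∀ j, LL h hk m (bNO h j (n - j) x) - bNO h j (n - j) (LL h hk m x) =
      ((((2 * m - 2 * ((j + m : ℤ) : ℂ)) • Nf (j + m) + (2 * (j : ℂ) - 2 * n) • Nf j) +
        (if m = -n then (1 / 3 : ℂ) else 0) • (g j : ℂ) • x)) := by
    intro j
    rw [bNO_eq h hc, bNO_eq h hc, map_sub, map_smul]
    have h1 := LL_comm_h h hk hc m j (h (n - j) x)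
    have h2 := congrArg (h j) (LL_comm_h h hk hc m (n - j) x)
    rw [map_sub, map_smul] at h2
    have h3 : LL h hk m (h j (h (n - j) x)) - h j (h (n - j) (LL h hk m x)) =
        -((2 * (j : ℂ)) • h (m + j) (h (n - j) x)) -
          (2 * ((n - j : ℤ) : ℂ)) • h j (h (m + (n - j)) x) := by
      rw [← h1, ← h2]; abel
    have h4 : Nf (j + m) = _ := bNO_eq h hc (j + m) (m + n - (j + m)) x
    have h5 : Nf j = _ := bNO_eq h hc j (m + n - j) x
    have h6 : LL h hk m (h j (h (n - j) x)) - h j (h (n - j) (LL h hk m x)) =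
        (2 * m - 2 * ((j + m : ℤ) : ℂ)) • Nf (j + m) + (2 * (j : ℂ) - 2 * n) • Nf j +
        (if m = -n then (1 / 3 : ℂ) else 0) • (g j : ℂ) • x := by
      rw [h3, h4, h5, show m + n - (j + m) = n - j by ring, show m + (n - j) = m + n - j by ring,
        add_comm m j]
      by_cases hmn : m = -n
      · have a1 : j + m + (n - j) = 0 := by omega
        have a2 : j + (m + n - j) = 0 := by omega
        rw [if_pos hmn, if_pos a1, if_pos a2]
        have hn : n = -m := by omega
        subst hn
        simp only [hg]
        by_cases h7 : 0 < j <;> by_cases h8 : 0 < j + m <;> simp only [h7, h8, if_true, if_false] <;>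
        · push_cast
          module
      · have a1 : ¬ j + m + (n - j) = 0 := by omega
        have a2 : ¬ j + (m + n - j) = 0 := by omega
        rw [if_neg hmn, if_neg a1, if_neg a2]
        push_cast
        module
    rw [← h6]; abel
  rw [finsum_congr e, finsum_add_distrib, finsum_add_distrib]
  · rw [sm (fun j => 2 * (m : ℂ) - 2 * (j : ℂ)), ← finsum_add_distrib (fs _) (fs _)]
    congr 1
    · show _ = (2 * (m - n) : ℂ) • ∑ᶠ j, Nf j
      rw [smul_finsum' _ fN]
      apply finsum_congr
      intro j
      module
    · have e1 : ∑ᶠ j, (g j : ℂ) • x = ((m ^ 3 - m : ℤ) : ℂ) • x := by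
        rw [← sum_cube' m]
        have e2 := (Int.castAddHom ℂ).map_finsum fg
        have e3 : (Function.support fun j => (g j : ℂ)).Finite := by
          refine fg.subset ?_
          intro j hj h0
          exact hj (by show (g j : ℂ) = 0; rw [h0]; simp)
        have e4 := finsum_smul' (R := ℂ) (M := V) e3 x
        rw [← e4]
        congr 1
        exact e2.symm
      rw [← smul_finsum' _ , e1, smul_smul]
      · congr 1
        split_ifs <;> ring
      · refine fg.subset ?_
        intro j hj h0
        exact hj (by show (g j : ℂ) • x = 0; rw [h0]; simp)
  · exact fsm (fun j => 2 * (m : ℂ) - 2 * (j : ℂ))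
  · exact fs _
  · refine ((fsm (fun j => 2 * (m : ℂ) - 2 * (j : ℂ))).union (fs (fun j => 2 * (j : ℂ) - 2 * n))).subset ?_
    exact Function.support_add _ _
  · refine fg.subset ?_
    intro j hj h0
    exact hj (by show _ • (g j : ℂ) • x = 0; rw [h0]; simp)

end Heis

/-! ### Clifford relations -/

theorem aOp_e (m : ℤ) (S : Finset ℕ) : aOp m (eD S) = aVec m S := by
  simp [aOp, eD]

/-- The sign. -/
def sg (t : ℕ) (S : Finset ℕ) : ℂ := (-1 : ℂ) ^ (S.filter (fun s => t < s)).card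

theorem sg_sq (t : ℕ) (S : Finset ℕ) : sg t S * sg t S = 1 := by
  unfold sg
  rw [← mul_pow]; simp

theorem sg_insert (t u : ℕ) (S : Finset ℕ) (hu : u ∉ S) :
    sg t (insert u S) = (if t < u then -1 else 1) * sg t S := by
  unfold sg
  rw [Finset.filter_insert]
  split_ifs
  · rw [Finset.card_insert_of_notMem (by simp [hu]), pow_succ]; ring
  · simp

theorem sg_erase (t u : ℕ) (S : Finset ℕ) (hu : u ∈ S) :
    sg t (S.erase u) = (if t < u then -1 else 1) * sg t S := by
  conv_rhs => rw [← Finset.insert_erase hu, sg_insert _ _ _ (Finset.notMem_erase _ _)]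
  split_ifs <;> ring

/-- Creation operator on a basis vector. -/
theorem aOp_cr (t : ℕ) (S : Finset ℕ) :
    aOp (t : ℤ) (eD S) = if t ∈ S then 0 else sg t S • eD (insert t S) := by
  rw [aOp_e]; simp [aVec, sg]

theorem aOp_an (t : ℕ) (S : Finset ℕ) :
    aOp (-(t : ℤ) - 1) (eD S) = if t ∈ S then sg t S • eD (S.erase t) else 0 := by
  rw [aOp_e]
  have : ¬ (0 : ℤ) ≤ -(t : ℤ) - 1 := by omega
  have h2 : (-(-(t : ℤ) - 1) - 1).toNat = t := by omega
  simp only [aVec, sg, if_neg this, h2]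

theorem lin_ext (A B : FockD →ₗ[ℂ] FockD) (hAB : ∀ S, A (eD S) = B (eD S)) : A = B := by
  apply Finsupp.lhom_ext
  intro S c
  have : Finsupp.single S c = c • eD S := by simp [eD]
  rw [this, map_smul, map_smul, hAB]

theorem cliff_cc (t u : ℕ) (S : Finset ℕ) :
    aOp (t : ℤ) (aOp (u : ℤ) (eD S)) + aOp (u : ℤ) (aOp (t : ℤ) (eD S)) = 0 := by
  rw [aOp_cr, aOp_cr]
  by_cases ht : t ∈ S <;> by_cases hu : u ∈ S <;> by_cases htu : t = u
  all_goals try subst htu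
  all_goals simp_all [aOp_cr, sg_insert, smul_smul]
  rw [if_neg (fun h => htu (Eq.symm h)), Finset.insert_comm u t]
  rcases lt_or_gt_of_ne htu with h | h
  · rw [if_pos h, if_neg (by omega : ¬ u < t), mul_comm (sg u S)]; abel
  · rw [if_pos h, if_neg (by omega : ¬ t < u), mul_comm (sg u S)]; abel

theorem cliff_aa (t u : ℕ) (S : Finset ℕ) :
    aOp (-(t : ℤ) - 1) (aOp (-(u : ℤ) - 1) (eD S)) +
      aOp (-(u : ℤ) - 1) (aOp (-(t : ℤ) - 1) (eD S)) = 0 := by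
  rw [aOp_an, aOp_an]
  by_cases ht : t ∈ S <;> by_cases hu : u ∈ S <;> by_cases htu : t = u
  all_goals try subst htu
  all_goals simp_all [aOp_an, sg_erase, smul_smul]
  rw [if_neg (fun h => htu (Eq.symm h)), Finset.erase_right_comm]
  rcases lt_or_gt_of_ne htu with h | h
  · rw [if_pos h, if_neg (by omega : ¬ u < t), mul_comm (sg u S)]; abel
  · rw [if_pos h, if_neg (by omega : ¬ t < u), mul_comm (sg u S)]; abel

theorem cliff_ca (t u : ℕ) (S : Finset ℕ) :
    aOp (t : ℤ) (aOp (-(u : ℤ) - 1) (eD S)) +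
      aOp (-(u : ℤ) - 1) (aOp (t : ℤ) (eD S)) = if t = u then eD S else 0 := by
  rw [aOp_an, aOp_cr]
  by_cases ht : t ∈ S <;> by_cases hu : u ∈ S <;> by_cases htu : t = u
  all_goals try subst htu
  all_goals simp_all [aOp_an, aOp_cr, sg_erase, sg_insert, smul_smul, sg_sq]
  · rw [Finset.erase_insert_of_ne htu]
    rcases lt_or_gt_of_ne htu with h | h
    · rw [if_pos h, if_neg (by omega : ¬ u < t), mul_comm (sg u S)]; abel
    · rw [if_pos h, if_neg (by omega : ¬ t < u), mul_comm (sg u S)]; abel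
  · exact fun h => absurd (Eq.symm h) htu

theorem cliff (i j : ℤ) (x : FockD) :
    aOp i (aOp j x) + aOp j (aOp i x) = if i + j = -1 then x else 0 := by
  have key : (aOp i ∘ₗ aOp j + aOp j ∘ₗ aOp i) =
      (if i + j = -1 then (LinearMap.id : FockD →ₗ[ℂ] FockD) else 0) := by
    apply lin_ext
    intro S
    have neg : ∀ i : ℤ, ¬ 0 ≤ i → ∃ t : ℕ, i = -(t : ℤ) - 1 :=
      fun i hi => ⟨(-i - 1).toNat, by omega⟩
    simp only [LinearMap.add_apply, LinearMap.comp_apply]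
    by_cases hi : 0 ≤ i <;> by_cases hj : 0 ≤ j
    · obtain ⟨t, rfl⟩ := Int.eq_ofNat_of_zero_le hi
      obtain ⟨u, rfl⟩ := Int.eq_ofNat_of_zero_le hj
      rw [cliff_cc, if_neg (by omega)]; rfl
    · obtain ⟨t, rfl⟩ := Int.eq_ofNat_of_zero_le hi
      obtain ⟨u, rfl⟩ := neg j hj
      rw [cliff_ca]
      by_cases htu : t = u
      · rw [if_pos htu, if_pos (by omega)]; rfl
      · rw [if_neg htu, if_neg (by omega)]; rfl
    · obtain ⟨t, rfl⟩ := neg i hi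
      obtain ⟨u, rfl⟩ := Int.eq_ofNat_of_zero_le hj
      rw [add_comm (aOp _ _), cliff_ca]
      by_cases htu : u = t
      · rw [if_pos htu, if_pos (by omega)]; rfl
      · rw [if_neg htu, if_neg (by omega)]; rfl
    · obtain ⟨t, rfl⟩ := neg i hi
      obtain ⟨u, rfl⟩ := neg j hj
      rw [cliff_aa, if_neg (by omega)]; rfl
  have := LinearMap.congr_fun key x
  simp only [LinearMap.add_apply, LinearMap.comp_apply] at this
  rw [this]
  split_ifs <;> rfl

theorem aOp_kill (x : FockD) : ∃ N : ℤ, 0 ≤ N ∧ ∀ m, m < -N → aOp m x = 0 := by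
  induction x using Finsupp.induction_linear with
  | zero => exact ⟨0, le_rfl, fun m _ => map_zero _⟩
  | add f g hf hg =>
    obtain ⟨N, hN0, hN⟩ := hf
    obtain ⟨M, hM0, hM⟩ := hg
    refine ⟨N + M, by omega, fun m hm => ?_⟩
    rw [map_add, hN m (by omega), hM m (by omega), add_zero]
  | single S c =>
    refine ⟨(S.sup id : ℕ) + 1, by omega, fun m hm => ?_⟩
    have : Finsupp.single S c = c • eD S := by simp [eD]
    obtain ⟨t, rfl⟩ : ∃ t : ℕ, m = -(t : ℤ) - 1 := ⟨(-m - 1).toNat, by omega⟩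
    rw [this, map_smul, aOp_an, if_neg, smul_zero]
    intro ht
    have : t ≤ S.sup id := Finset.le_sup (f := id) ht
    omega

theorem NO_zero (x : FockD) (N : ℤ) (hN : ∀ m, m < -N → aOp m x = 0) (i j : ℤ)
    (h1 : 0 ≤ i → j < -N) (h2 : i < 0 → i < -N) : NO i j x = 0 := by
  unfold NO
  split_ifs with h
  · rw [LinearMap.comp_apply, hN j (h1 h), map_zero]
  · rw [LinearMap.neg_apply, LinearMap.comp_apply, hN i (h2 (by omega)), map_zero, neg_zero]

theorem NO_fin (n : ℤ) (x : FockD) :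
    (Function.support fun i : ℤ =>
      (((-1 : ℂ) ^ (i + 1)) • NO i (-2 * n - 1 - i)) x).Finite := by
  obtain ⟨N, hN0, hN⟩ := aOp_kill x
  refine (Set.finite_Icc (-N) (-2 * n - 1 + N)).subset ?_
  intro i hi
  by_contra hc
  apply hi
  simp only [Set.mem_Icc, not_and_or, not_le] at hc
  show ((-1 : ℂ) ^ (i + 1)) • NO i (-2 * n - 1 - i) x = 0
  by_cases h0 : 0 ≤ i
  · rw [NO_zero x N hN i _ (by omega) (by omega), smul_zero]
  · by_cases h1 : i < -N
    · rw [NO_zero x N hN i _ (by omega) (by omega), smul_zero]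
    · have hj : -2 * n - 1 - i < -N := by omega
      unfold NO
      rw [if_neg h0, LinearMap.neg_apply, LinearMap.comp_apply]
      have := cliff (-2 * n - 1 - i) i x
      rw [hN _ hj, map_zero, add_zero] at this
      rw [this, if_neg, neg_zero, smul_zero]
      omega

/-- Linear version of `hD`. -/
def hL (n : ℤ) : FockD →ₗ[ℂ] FockD :=
  (1 / 2 : ℂ) • lfSum (fun i : ℤ => ((-1 : ℂ) ^ (i + 1)) • NO i (-2 * n - 1 - i)) (NO_fin n)

theorem hL_eq (n : ℤ) (x : FockD) : hL n x = hD n x := rfl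

theorem hL_kill (x : FockD) : ∃ N : ℤ, ∀ n, N ≤ n → hL n x = 0 := by
  obtain ⟨N, hN0, hN⟩ := aOp_kill x
  refine ⟨N + 1, fun n hn => ?_⟩
  show (1 / 2 : ℂ) • ∑ᶠ i : ℤ, ((-1 : ℂ) ^ (i + 1)) • NO i (-2 * n - 1 - i) x = 0
  rw [finsum_eq_zero_of_forall_eq_zero, smul_zero]
  intro i
  by_cases h0 : 0 ≤ i
  · rw [NO_zero x N hN i _ (by omega) (by omega), smul_zero]
  · by_cases h1 : i < -N
    · rw [NO_zero x N hN i _ (by omega) (by omega), smul_zero]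
    · have hj : -2 * n - 1 - i < -N := by omega
      unfold NO
      rw [if_neg h0, LinearMap.neg_apply, LinearMap.comp_apply]
      have := cliff (-2 * n - 1 - i) i x
      rw [hN _ hj, map_zero, add_zero] at this
      rw [this, if_neg, neg_zero, smul_zero]
      omega

theorem NO_eq (i j : ℤ) (x : FockD) :
    NO i j x = aOp i (aOp j x) - (if 0 ≤ i then (0 : ℂ) else if i + j = -1 then 1 else 0) • x := by
  unfold NO
  by_cases h : 0 ≤ i
  · simp [h]
  · have := cliff i j x
    rw [if_neg h, if_neg h]
    simp only [LinearMap.neg_apply, LinearMap.comp_apply]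
    have h2 : (if i + j = -1 then (1 : ℂ) else 0) • x = if i + j = -1 then x else 0 := by
      split_ifs <;> simp
    rw [h2, ← this]; abel

theorem sgn_sq (k : ℤ) : ((-1 : ℂ) ^ k) * ((-1 : ℂ) ^ k) = 1 := by
  rw [← mul_zpow]; simp

theorem sgn_neg (k : ℤ) : (-1 : ℂ) ^ (-k) = (-1 : ℂ) ^ k := by
  rw [zpow_neg, ← inv_zpow]; norm_num

theorem hL_comm_a (n k : ℤ) (x : FockD) :
    hL n (aOp k x) - aOp k (hL n x) = ((-1 : ℂ) ^ (k + 1)) • aOp (k - 2 * n) x := by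
  have h0 := lfSum_comm _ (NO_fin n) (aOp k) x
  have e : ∀ i : ℤ, aOp k ((((-1 : ℂ) ^ (i + 1)) • NO i (-2 * n - 1 - i)) x) -
      (((-1 : ℂ) ^ (i + 1)) • NO i (-2 * n - 1 - i)) (aOp k x) =
      (if i = -1 - k then (-((-1 : ℂ) ^ (k + 1))) • aOp (k - 2 * n) x else 0) +
      (if i = k - 2 * n then (-((-1 : ℂ) ^ (k + 1))) • aOp (k - 2 * n) x else 0) := by
    intro i
    have h1 := cliff k i (aOp (-2 * n - 1 - i) x)
    have h2 := congrArg (aOp i) (cliff k (-2 * n - 1 - i) x)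
    rw [map_add] at h2
    have h3 : aOp k (aOp i (aOp (-2 * n - 1 - i) x)) - aOp i (aOp (-2 * n - 1 - i) (aOp k x)) =
        (if k + i = -1 then aOp (-2 * n - 1 - i) x else 0) -
          aOp i (if k + (-2 * n - 1 - i) = -1 then x else 0) := by
      rw [← h1, ← h2]; abel
    have h4 : aOp k ((((-1 : ℂ) ^ (i + 1)) • NO i (-2 * n - 1 - i)) x) -
      (((-1 : ℂ) ^ (i + 1)) • NO i (-2 * n - 1 - i)) (aOp k x) = ((-1 : ℂ) ^ (i + 1)) •
        (aOp k (aOp i (aOp (-2 * n - 1 - i) x)) - aOp i (aOp (-2 * n - 1 - i) (aOp k x))) := by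
      rw [LinearMap.smul_apply, LinearMap.smul_apply, NO_eq, NO_eq, map_smul, map_sub, map_smul]
      module
    rw [h4, h3, smul_sub, sub_eq_add_neg]
    congr 1
    · by_cases hi : i = -1 - k
      · rw [if_pos hi, if_pos (by omega), hi, show -2 * n - 1 - (-1 - k) = k - 2 * n by ring]
        congr 1
        rw [show -1 - k + 1 = -k by ring, zpow_neg, zpow_add₀ (by norm_num), ← inv_zpow]
        norm_num
      · rw [if_neg hi, if_neg (by omega), smul_zero]
    · by_cases hi : i = k - 2 * n
      · rw [if_pos hi, if_pos (by omega), hi, ← neg_smul]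
        congr 2
        rw [show k - 2 * n + 1 = (k + 1) + 2 * (-n) by ring, zpow_add₀ (by norm_num), zpow_mul]
        norm_num
      · rw [if_neg hi, if_neg (by omega), map_zero, smul_zero, neg_zero]
  rw [finsum_congr e, finsum_add_distrib] at h0
  · rw [finsum_eq_single _ (-1 - k) (by intro j hj; rw [if_neg hj]),
      finsum_eq_single _ (k - 2 * n) (by intro j hj; rw [if_neg hj]), if_pos rfl, if_pos rfl] at h0
    unfold hL
    rw [LinearMap.smul_apply, LinearMap.smul_apply, map_smul, ← smul_sub, ← neg_sub, h0]
    module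
  · refine (Set.finite_singleton (-1 - k)).subset ?_
    intro j hj
    by_contra hc
    exact hj (if_neg hc)
  · refine (Set.finite_singleton (k - 2 * n)).subset ?_
    intro j hj
    by_contra hc
    exact hj (if_neg hc)

theorem hL_comm (m n : ℤ) (x : FockD) :
    hL m (hL n x) - hL n (hL m x) = (if m + n = 0 then (m : ℂ) else 0) • x := by
  have h0 := lfSum_comm _ (NO_fin n) (hL m) x
  obtain ⟨N, hN0, hN⟩ := aOp_kill x
  set f : ℤ → FockD := fun i => aOp i (aOp (-2 * (m + n) - 1 - i) x) with hf
  have tel := finsum_telescope f (if m + n = 0 then x else 0) (N + 2 * |m + n| + 1)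
    (by
      intro i hi
      have h3 := le_abs_self (m + n)
      have h4 := neg_abs_le (m + n)
      simp only [hf]
      rw [hN _ (by omega), map_zero])
    (by
      intro i hi
      have h3 := le_abs_self (m + n)
      have h4 := neg_abs_le (m + n)
      have h5 := cliff i (-2 * (m + n) - 1 - i) x
      rw [hN i (by omega), map_zero, add_zero] at h5
      simp only [hf]
      rw [h5]
      by_cases h : m + n = 0
      · rw [if_pos h, if_pos (by omega)]
      · rw [if_neg h, if_neg (by omega)]) (2 * m)
  have e : ∀ i : ℤ, hL m ((((-1 : ℂ) ^ (i + 1)) • NO i (-2 * n - 1 - i)) x) -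
      (((-1 : ℂ) ^ (i + 1)) • NO i (-2 * n - 1 - i)) (hL m x) = f (i - 2 * m) - f i := by
    intro i
    have h1 := hL_comm_a m i (aOp (-2 * n - 1 - i) x)
    have h2 := congrArg (aOp i) (hL_comm_a m (-2 * n - 1 - i) x)
    rw [map_sub, map_smul] at h2
    have h3 : hL m (aOp i (aOp (-2 * n - 1 - i) x)) - aOp i (aOp (-2 * n - 1 - i) (hL m x)) =
        ((-1 : ℂ) ^ (i + 1)) • f (i - 2 * m) +
        ((-1 : ℂ) ^ (-2 * n - 1 - i + 1)) • f i := by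
      simp only [hf]
      rw [show -2 * (m + n) - 1 - (i - 2 * m) = -2 * n - 1 - i by ring,
        show -2 * (m + n) - 1 - i = -2 * n - 1 - i - 2 * m by ring, ← h1, ← h2]; abel
    have h4 : hL m ((((-1 : ℂ) ^ (i + 1)) • NO i (-2 * n - 1 - i)) x) -
      (((-1 : ℂ) ^ (i + 1)) • NO i (-2 * n - 1 - i)) (hL m x) = ((-1 : ℂ) ^ (i + 1)) •
        (hL m (aOp i (aOp (-2 * n - 1 - i) x)) - aOp i (aOp (-2 * n - 1 - i) (hL m x))) := by
      rw [LinearMap.smul_apply, LinearMap.smul_apply, NO_eq, NO_eq, map_smul, map_sub, map_smul]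
      module
    have h5 : ((-1 : ℂ) ^ (-2 * n - 1 - i + 1)) = -((-1 : ℂ) ^ (i + 1)) := by
      rw [show -2 * n - 1 - i + 1 = 2 * (-n) + -i by ring, zpow_add₀ (by norm_num), zpow_mul,
        zpow_add₀ (by norm_num : (-1 : ℂ) ≠ 0) i, sgn_neg]
      norm_num
    rw [h4, h3, h5, smul_add, smul_smul, smul_smul, mul_neg, sgn_sq]
    module
  rw [finsum_congr e, tel.2] at h0
  conv_lhs => rw [hL.eq_def n]
  rw [LinearMap.smul_apply, LinearMap.smul_apply, map_smul, ← smul_sub, h0]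
  split_ifs
  · rw [← Int.cast_smul_eq_zsmul ℂ, smul_smul]
    congr 1
    push_cast; ring
  · simp

theorem L1D_eq (n : ℤ) (x : FockD) : L1D n x = (1 / 2 : ℂ) • LL hL hL_kill n x := by
  show _ = (1 / 2 : ℂ) • ∑ᶠ j, bNO hL j (n - j) x
  unfold L1D
  congr 1
  apply finsum_congr
  intro j
  unfold bNO
  split_ifs <;> rfl

/-- The operators `L¹_n = (1/2) ∑_j :h_j h_{n−j}:` on the neutral fermion Fock space satisfy
the Virasoro relations with central charge `1`. -/
theorem virasoro_charge_one (m n : ℤ) (x : FockD) :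
    L1D m (L1D n x) - L1D n (L1D m x)
      = ((m - n : ℤ) : ℂ) • L1D (m + n) x
        + (if m = -n then ((m ^ 3 - m : ℤ) : ℂ) / 12 else 0) • x := by
  simp only [L1D_eq]
  rw [map_smul, map_smul, smul_smul, smul_smul, ← smul_sub,
    LL_comm hL hL_kill hL_comm]
  split_ifs <;> push_cast <;> module
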